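/- Let 1 ≤ k ≤ N be integers and A : 𝓢(ℝ^k) → 𝓢'(ℝ^k) continuous linear. For each k-tuple j = (j₁,…,j_k) of pairwise distinct elements of {1,…,N} let E_j : 𝓢(ℝ^N) → 𝓢'(ℝ^N) be the unique k-particle extension of A in the variables j₁,…,j_k (characterized on pure tensors by E_j(f₁⊗⋯⊗f_N)(g₁⊗⋯⊗g_N) = A(f_{j₁}⊗⋯⊗f_{j_k})(g_{j₁}⊗⋯⊗g_{j_k})·∏_{m ∉ {j₁,…,j_k}} ∫ f_m g_m). Set C_{k,N} := (k!·binom(N,k))⁻¹ and ε_{k,N}(A) := C_{k,N} · Σ_{j ∈ P_k^N} E_j, the sum over all such tuples. Then: (i) ε_{k,N}(A) maps the bosonic Schwartz space 𝓢_s(ℝ^N) into the bosonic tempered distributions 𝓢'_s(ℝ^N); (ii) if A is skew-adjoint then ε_{k,N}(A) is skew-adjoint; (iii) A ↦ ε_{k,N}(A) is linear and continuous from L(𝓢(ℝ^k),𝓢'(ℝ^k)) to L(𝓢(ℝ^N),𝓢'(ℝ^N)), both spaces carrying the topology of uniform convergence on bounded sets. -/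

import Mathlib

/-!
Pure tensors are total in `𝓢(ℝⁿ)`: the closure of their span is invariant under translations and
contains compactly supported bumps of arbitrarily small support and total mass one, and convolving
with such bumps recovers every Schwartz function. Hence the extension `A_j` is unique, and it is
`A_j F G = ∫ A (F (·, y)) (G (·, y)) dy`, where `y` runs over the variables not selected by `j`.
When `F` ranges over a bounded set and `y` over all passive values, the functions
`(1 + ‖y‖) ^ r • F (·, y)` still form a bounded set; so `A` is bounded on them and the integrand is
dominated by a multiple of `(1 + ‖y‖) ^ (-r)`. For large `r` this gives the convergence of the
integral, the continuity of `A_j`, and the continuity of `A ↦ A_j`. A permutation of the variables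
permutes the tuples `j`, and complex conjugation passes under the integral.
-/

open MeasureTheory SchwartzMap

/-- Distribution-valued operators on `ℝ^n`: continuous linear maps `𝓢(ℝ^n) → 𝓢'(ℝ^n)`. -/
abbrev DVO (n : ℕ) : Type :=
  SchwartzMap (Fin n → ℝ) ℂ →L[ℂ] (SchwartzMap (Fin n → ℝ) ℂ →L[ℂ] ℂ)

/-- The continuous linear equivalence on `ℝ^k` permuting coordinates: `x ↦ x ∘ π`. -/
noncomputable def permCLE (k : ℕ) (π : Equiv.Perm (Fin k)) : (Fin k → ℝ) ≃L[ℝ] (Fin k → ℝ) :=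
  (LinearEquiv.funCongrLeft ℝ ℝ π).toContinuousLinearEquiv

/-- The action of a permutation `π` on Schwartz functions on `ℝ^k`. -/
noncomputable def permCLM (k : ℕ) (π : Equiv.Perm (Fin k)) :
    SchwartzMap (Fin k → ℝ) ℂ →L[ℂ] SchwartzMap (Fin k → ℝ) ℂ :=
  SchwartzMap.compCLMOfContinuousLinearEquiv ℂ (permCLE k π)

/-- A Schwartz function is bosonic (symmetric) if it is invariant under all permutations of its
arguments. -/
def IsBosonic {k : ℕ} (f : SchwartzMap (Fin k → ℝ) ℂ) : Prop :=
  ∀ (π : Equiv.Perm (Fin k)) (x : Fin k → ℝ), f (x ∘ π) = f x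

/-- A tempered distribution `u` is bosonic (symmetric) if `u (π·g) = u g` for all permutations. -/
def IsBosonicDist {k : ℕ} (u : SchwartzMap (Fin k → ℝ) ℂ →L[ℂ] ℂ) : Prop :=
  ∀ (π : Equiv.Perm (Fin k)) (g : SchwartzMap (Fin k → ℝ) ℂ), u (permCLM k π g) = u g

/-- `F ∈ 𝓢(ℝ^n)` is the pure tensor `f₁ ⊗ ⋯ ⊗ f_n`. -/
def IsTensor {n : ℕ} (f : Fin n → SchwartzMap ℝ ℂ) (F : SchwartzMap (Fin n → ℝ) ℂ) : Prop :=
  ∀ x : Fin n → ℝ, F x = ∏ m, f m (x m)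

/-- `fc` is the complex conjugate of the Schwartz function `f`. -/
def IsConjOf {n : ℕ} (f fc : SchwartzMap (Fin n → ℝ) ℂ) : Prop :=
  ∀ x, fc x = (starRingEnd ℂ) (f x)

/-- `A : 𝓢(ℝ^n) → 𝓢'(ℝ^n)` is skew-adjoint: `(A g)(conj f) = − conj ((A f)(conj g))`. -/
def IsSkewAdjointDVO {n : ℕ} (A : DVO n) : Prop :=
  ∀ f g fc gc : SchwartzMap (Fin n → ℝ) ℂ, IsConjOf f fc → IsConjOf g gc →
    A g fc = - (starRingEnd ℂ) (A f gc)

/-- `E` is the `N`-particle extension `A_{(j₁,…,j_k)}` of the `k`-particle operator `A` in the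
(distinct) variables `j₁, …, j_k`. -/
def IsExtension (k N : ℕ) (A : DVO k) (ℓ : Fin k → Fin N) (E : DVO N) : Prop :=
  ∀ (f g : Fin N → SchwartzMap ℝ ℂ)
    (F G : SchwartzMap (Fin N → ℝ) ℂ) (F' G' : SchwartzMap (Fin k → ℝ) ℂ),
    IsTensor f F → IsTensor g G →
    IsTensor (fun a => f (ℓ a)) F' → IsTensor (fun a => g (ℓ a)) G' →
    E F G = A F' G' * ∏ m ∈ Finset.univ \ Finset.image ℓ Finset.univ, ∫ x : ℝ, f m x * g m x

/-- The normalizing constant `C_{k,N} = (k!·binom(N,k))⁻¹ = 1/(N⋯(N−k+1))`. -/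
noncomputable def epsConst (k N : ℕ) : ℂ :=
  ((Nat.factorial k * Nat.choose N k : ℕ) : ℂ)⁻¹

section BilinearMaps

open Filter Topology

variable {𝕜 E F G : Type*} [NontriviallyNormedField 𝕜]
  [AddCommGroup E] [Module 𝕜 E] [TopologicalSpace E]
  [AddCommGroup F] [Module 𝕜 F] [TopologicalSpace F] [IsTopologicalAddGroup F]
  [ContinuousSMul 𝕜 F]
  [AddCommGroup G] [Module 𝕜 G] [TopologicalSpace G] [IsTopologicalAddGroup G]
  [ContinuousConstSMul 𝕜 G]

/-- A convergent sequence is bounded, and `E →L[𝕜] F →L[𝕜] G` carries the topology of uniform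
convergence on bounded sets. -/
theorem tendsto_bilin_apply (A : E →L[𝕜] F →L[𝕜] G) {u : ℕ → E} {v : ℕ → F} {a : E} {b : F}
    (hu : Tendsto u atTop (𝓝 a)) (hv : Tendsto v atTop (𝓝 b)) :
    Tendsto (fun n => A (u n) (v n)) atTop (𝓝 (A a b)) := by
  have hzero : Tendsto (fun n => A (u n) - A a) atTop (𝓝 0) := by
    simpa using ((A.continuous.tendsto a).comp hu).sub_const (A a)
  have hsub : Tendsto (fun n => (A (u n) - A a) (v n)) atTop (𝓝 0) := by
    refine tendsto_def.2 fun U hU => ?_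
    filter_upwards [hzero.eventually (ContinuousLinearMap.eventually_nhds_zero_mapsTo
      (hv.isVonNBounded_range 𝕜) hU)] with n hn
    exact hn (Set.mem_range_self n)
  simpa using hsub.add (((A a).continuous.tendsto b).comp hv)

theorem continuous_bilin_apply {X : Type*} [TopologicalSpace X] [SequentialSpace X]
    (A : E →L[𝕜] F →L[𝕜] G) {u : X → E} {v : X → F} (hu : Continuous u) (hv : Continuous v) :
    Continuous fun x => A (u x) (v x) :=
  SeqContinuous.continuous fun _ _ hx =>
    tendsto_bilin_apply A ((hu.tendsto _).comp hx) ((hv.tendsto _).comp hx)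

end BilinearMaps

section LocallyBounded

open Bornology

variable {𝕜 E F G : Type*} [NontriviallyNormedField 𝕜]
  [AddCommGroup E] [Module 𝕜 E] [TopologicalSpace E] [IsTopologicalAddGroup E]
  [ContinuousSMul 𝕜 E] [FirstCountableTopology E]
  [AddCommGroup F] [Module 𝕜 F] [TopologicalSpace F] [IsTopologicalAddGroup F]
  [ContinuousSMul 𝕜 F] [FirstCountableTopology F]
  [AddCommGroup G] [Module 𝕜 G] [TopologicalSpace G] [IsTopologicalAddGroup G]
  [ContinuousSMul 𝕜 G]

/-- The continuous bilinear map, in curried form, defined by a bilinear map which sends pairs of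
bounded sets to bounded sets. -/
noncomputable def clmOfLocallyBounded₂ (f : E →ₗ[𝕜] F →ₗ[𝕜] G)
    (hf : ∀ s t, IsVonNBounded 𝕜 s → IsVonNBounded 𝕜 t →
      IsVonNBounded 𝕜 (Set.image2 (fun x y => f x y) s t)) : E →L[𝕜] F →L[𝕜] G :=
  have hcont (x : E) : Continuous (f x) :=
    (f x).continuous_of_locally_bounded fun t ht => by
      simpa using hf {x} t (isVonNBounded_singleton x) ht
  let g : E →ₗ[𝕜] F →L[𝕜] G :=
    { toFun := fun x => ⟨f x, hcont x⟩
      map_add' := fun x y => by ext; simp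
      map_smul' := fun c x => by ext; simp }
  ⟨g, g.continuous_of_locally_bounded fun s hs =>
    ContinuousLinearMap.isVonNBounded_iff.2 fun t ht => by
      rw [Set.image2_image_left]
      exact hf s t hs ht⟩

theorem clmOfLocallyBounded₂_apply (f : E →ₗ[𝕜] F →ₗ[𝕜] G)
    (hf : ∀ s t, IsVonNBounded 𝕜 s → IsVonNBounded 𝕜 t →
      IsVonNBounded 𝕜 (Set.image2 (fun x y => f x y) s t)) (x : E) (y : F) :
    clmOfLocallyBounded₂ f hf x y = f x y := rfl

end LocallyBounded

section Affine

variable {E F G : Type*} [NormedAddCommGroup E] [NormedSpace ℝ E] [NormedAddCommGroup F]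
  [NormedSpace ℝ F] [NormedAddCommGroup G] [NormedSpace ℝ G]

theorem norm_iteratedFDeriv_comp_affine_le {f : F → G} {n : ℕ} (hf : ContDiff ℝ n f)
    (L : E →L[ℝ] F) (hL : ‖L‖ ≤ 1) (c : F) (x : E) :
    ‖iteratedFDeriv ℝ n (fun x => f (L x + c)) x‖ ≤ ‖iteratedFDeriv ℝ n f (L x + c)‖ := by
  have hcomp : (fun x => f (L x + c)) = (fun z => f (z + c)) ∘ L := rfl
  have hshift : ContDiff ℝ n fun z => f (z + c) := hf.comp (contDiff_id.add contDiff_const)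
  rw [hcomp, L.iteratedFDeriv_comp_right hshift x le_rfl, iteratedFDeriv_comp_add_right]
  exact (ContinuousMultilinearMap.norm_compContinuousLinearMap_le _ _).trans
    (mul_le_of_le_one_right (norm_nonneg _)
      (Finset.prod_le_one (fun _ _ => norm_nonneg _) fun _ _ => hL))

end Affine

section PureTensors

variable {ι : Type*} [Fintype ι] {E : ι → Type*} [∀ i, NormedAddCommGroup (E i)]

theorem norm_le_prod_one_add_norm (x : ∀ i, E i) : ‖x‖ ≤ ∏ i, (1 + ‖x i‖) := by
  refine (pi_norm_le_iff_of_nonneg (by positivity)).2 fun i => ?_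
  calc ‖x i‖ ≤ ∏ j ∈ {i}, (1 + ‖x j‖) := by simp
    _ ≤ ∏ j, (1 + ‖x j‖) :=
      Finset.prod_le_prod_of_subset_of_one_le (Finset.subset_univ _)
        (fun _ _ => by positivity) fun _ _ _ => by simp

variable [∀ i, NormedSpace ℝ (E i)] {A : Type*} [NormedCommRing A] [NormedAlgebra ℝ A]
  [NormOneClass A]

theorem norm_iteratedFDeriv_prod_apply_le [DecidableEq ι] {f : ∀ i, E i → A} {n : ℕ}
    (hf : ∀ i, ContDiff ℝ n (f i)) (x : ∀ i, E i) :
    ‖iteratedFDeriv ℝ n (fun x : ∀ i, E i => ∏ i, f i (x i)) x‖ ≤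
      ∑ p ∈ (Finset.univ : Finset ι).sym n, ((p : Multiset ι).countPerms : ℝ) *
        ∏ i, ‖iteratedFDeriv ℝ ((p : Multiset ι).count i) (f i) (x i)‖ := by
  refine (norm_iteratedFDeriv_prod_le (f := fun i (x : ∀ i, E i) => f i (x i))
    (fun i _ => (hf i).comp (ContinuousLinearMap.proj (R := ℝ) (φ := E) i).contDiff)
    le_rfl).trans ?_
  gcongr with p _ i
  have hcount : (p : Multiset ι).count i ≤ n :=
    (Multiset.count_le_card i _).trans_eq p.2
  have hproj : ‖ContinuousLinearMap.proj (R := ℝ) (φ := E) i‖ ≤ 1 :=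
    ContinuousLinearMap.opNorm_le_bound _ zero_le_one fun y => by
      simpa using norm_le_pi_norm y i
  simpa using norm_iteratedFDeriv_comp_affine_le ((hf i).of_le (mod_cast hcount)) _ hproj 0 x

theorem exists_one_add_norm_pow_mul_iteratedFDeriv_le {V W : Type*} [NormedAddCommGroup V]
    [NormedSpace ℝ V] [NormedAddCommGroup W] [NormedSpace ℝ W] (f : 𝓢(V, W)) (k n : ℕ) :
    ∃ C, 0 ≤ C ∧ ∀ x, (1 + ‖x‖) ^ k * ‖iteratedFDeriv ℝ n f x‖ ≤ C :=
  ⟨_, by positivity,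
    one_add_le_sup_seminorm_apply (𝕜 := ℝ) (m := (k, n)) le_rfl le_rfl f⟩

/-- The pure tensor `⊗ᵢ fᵢ` of Schwartz functions, as a Schwartz function on the product. -/
noncomputable def pureTensor (f : ∀ i, 𝓢(E i, A)) : 𝓢(∀ i, E i, A) where
  toFun x := ∏ i, f i (x i)
  smooth' := contDiff_prod fun i _ =>
    ((f i).smooth ⊤).comp (ContinuousLinearMap.proj (R := ℝ) (φ := E) i).contDiff
  decay' k n := by
    classical
    choose C _ hC using fun i p => exists_one_add_norm_pow_mul_iteratedFDeriv_le (f i) k p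
    refine ⟨∑ p ∈ (Finset.univ : Finset ι).sym n, ((p : Multiset ι).countPerms : ℝ) *
      ∏ i, C i ((p : Multiset ι).count i), fun x => ?_⟩
    calc ‖x‖ ^ k * ‖iteratedFDeriv ℝ n (fun x : ∀ i, E i => ∏ i, f i (x i)) x‖
        ≤ (∏ i, (1 + ‖x i‖)) ^ k * ∑ p ∈ (Finset.univ : Finset ι).sym n,
            ((p : Multiset ι).countPerms : ℝ) *
              ∏ i, ‖iteratedFDeriv ℝ ((p : Multiset ι).count i) (f i) (x i)‖ := by
          gcongr
          · exact norm_le_prod_one_add_norm x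
          · exact norm_iteratedFDeriv_prod_apply_le (fun i => (f i).smooth n) x
      _ = ∑ p ∈ (Finset.univ : Finset ι).sym n, ((p : Multiset ι).countPerms : ℝ) *
            ∏ i, (1 + ‖x i‖) ^ k *
              ‖iteratedFDeriv ℝ ((p : Multiset ι).count i) (f i) (x i)‖ := by
          simp only [Finset.mul_sum, Finset.prod_mul_distrib, Finset.prod_pow, mul_left_comm]
      _ ≤ _ := by
          gcongr with p _ i
          exact hC i _ _

theorem pureTensor_apply (f : ∀ i, 𝓢(E i, A)) (x : ∀ i, E i) :
    pureTensor f x = ∏ i, f i (x i) := rfl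

end PureTensors

section Translation

open Filter Topology

variable {E F : Type*} [NormedAddCommGroup E] [NormedSpace ℝ E] [NormedAddCommGroup F]
  [NormedSpace ℝ F]

theorem norm_le_one_add_norm_of_mem_segment {x y z : E} (hy : ‖y‖ ≤ 1)
    (hz : z ∈ segment ℝ x (x - y)) : ‖x‖ ≤ 1 + ‖z‖ := by
  have hzx : ‖z - x‖ ≤ 1 := (norm_sub_le_of_mem_segment hz).trans (by simpa using hy)
  have hxz : ‖x‖ ≤ ‖z - x‖ + ‖z‖ := by simpa [norm_sub_rev] using norm_add_le (x - z) z
  linarith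

theorem exists_pow_mul_norm_iteratedFDeriv_sub_le (g : 𝓢(E, F)) (k l : ℕ) :
    ∃ C, 0 ≤ C ∧ ∀ x y : E, ‖y‖ ≤ 1 →
      ‖x‖ ^ k * ‖iteratedFDeriv ℝ l g (x - y) - iteratedFDeriv ℝ l g x‖ ≤ C * ‖y‖ := by
  obtain ⟨C, hC₀, hC⟩ := exists_one_add_norm_pow_mul_iteratedFDeriv_le g k (l + 1)
  refine ⟨C, hC₀, fun x y hy => ?_⟩
  have hdiff : Differentiable ℝ (iteratedFDeriv ℝ l g) :=
    (g.smooth ⊤).differentiable_iteratedFDeriv (mod_cast ENat.natCast_lt_top l)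
  have hderiv : ∀ z ∈ segment ℝ x (x - y),
      ‖x‖ ^ k * ‖fderiv ℝ (iteratedFDeriv ℝ l g) z‖ ≤ C := fun z hz => by
    rw [norm_fderiv_iteratedFDeriv]
    refine le_trans ?_ (hC z)
    gcongr
    exact norm_le_one_add_norm_of_mem_segment hy hz
  have hmv := (convex_segment (𝕜 := ℝ) x (x - y)).norm_image_sub_le_of_norm_hasFDerivWithin_le
    (f := ‖x‖ ^ k • iteratedFDeriv ℝ l g) (C := C)
    (fun z _ => ((hdiff z).hasFDerivAt.const_smul (‖x‖ ^ k)).hasFDerivWithinAt)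
    (fun z hz => by simpa only [norm_smul, norm_pow, norm_norm] using hderiv z hz)
    (left_mem_segment ℝ x (x - y)) (right_mem_segment ℝ x (x - y))
  simpa [← smul_sub, norm_smul] using hmv

variable {𝕜 : Type*} [RCLike 𝕜] [NormedSpace 𝕜 F]

theorem iteratedFDeriv_compSubConst (g : 𝓢(E, F)) (y x : E) (l : ℕ) :
    iteratedFDeriv ℝ l (g.compSubConstCLM 𝕜 y) x = iteratedFDeriv ℝ l g (x - y) :=
  iteratedFDeriv_comp_sub (f := g) l y x

theorem continuous_compSubConst [SMulCommClass ℝ 𝕜 F] (g : 𝓢(E, F)) :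
    Continuous fun y : E => g.compSubConstCLM 𝕜 y := by
  refine continuous_iff_continuousAt.2 fun y => ?_
  refine ((schwartz_withSeminorms 𝕜 E F).tendsto_nhds _ _).2 ?_
  rintro ⟨k, l⟩ ε hε
  set h := g.compSubConstCLM 𝕜 y
  obtain ⟨C, hC₀, hC⟩ := exists_pow_mul_norm_iteratedFDeriv_sub_le h k l
  have hlim : Tendsto (fun z => C * ‖z - y‖) (𝓝 y) (𝓝 0) := by
    have : Continuous fun z => C * ‖z - y‖ := by fun_prop
    simpa using this.tendsto y
  filter_upwards [hlim.eventually (gt_mem_nhds hε), Metric.closedBall_mem_nhds y one_pos]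
    with z hzε hz
  refine (seminorm_le_bound 𝕜 k l _ (by positivity) fun x => ?_).trans_lt hzε
  have htrans : g.compSubConstCLM 𝕜 z = h.compSubConstCLM 𝕜 (z - y) := by
    simp [h, compSubConstCLM_comp]
  rw [htrans, FunLike.coe_sub, iteratedFDeriv_sub_apply (SchwartzMap.contDiffAt _ l)
    (SchwartzMap.contDiffAt _ l), iteratedFDeriv_compSubConst]
  exact hC x (z - y) (by simpa [dist_eq_norm] using hz)

end Translation

section BochnerIntegral

variable {X G : Type*} [MeasurableSpace X] {μ : Measure X} [NormedAddCommGroup G] [NormedSpace ℝ G]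

theorem integral_mem_of_isClosed [CompleteSpace G] {S : Submodule ℝ G}
    (hS : IsClosed (S : Set G)) {f : X → G} (hf : ∀ x, f x ∈ S) : ∫ x, f x ∂μ ∈ S := by
  have : CompleteSpace S := hS.completeSpace_coe
  have hcomm := S.subtypeₗᵢ.integral_comp_comm (μ := μ) fun x => (⟨f x, hf x⟩ : S)
  exact hcomm ▸ (∫ x, (⟨f x, hf x⟩ : S) ∂μ).2

theorem norm_integral_smul_sub_le {𝕜 : Type*} [RCLike 𝕜] [NormedSpace 𝕜 G] [CompleteSpace G]
    {φ : X → 𝕜} {h : X → G} {c : G} {ε : ℝ} (hφ : Integrable φ μ)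
    (hφh : Integrable (fun x => φ x • h x) μ) (hint : ∫ x, φ x ∂μ = 1)
    (hnorm : ∫ x, ‖φ x‖ ∂μ = 1) (hclose : ∀ x, φ x ≠ 0 → ‖h x - c‖ ≤ ε) :
    ‖∫ x, φ x • h x ∂μ - c‖ ≤ ε := by
  have hsub : ∫ x, φ x • h x ∂μ - c = ∫ x, φ x • (h x - c) ∂μ := by
    simp_rw [smul_sub]
    rw [integral_sub hφh (hφ.smul_const c), integral_smul_const, hint, one_smul]
  rw [hsub]
  calc ‖∫ x, φ x • (h x - c) ∂μ‖
      ≤ ∫ x, ‖φ x‖ * ε ∂μ := by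
        refine norm_integral_le_of_norm_le (hφ.norm.mul_const ε) (.of_forall fun x => ?_)
        rw [norm_smul]
        by_cases hx : φ x = 0
        · simp [hx]
        · gcongr
          exact hclose x hx
    _ = ε := by rw [integral_mul_const, hnorm, one_mul]

end BochnerIntegral

section ReflectedIntegration

open scoped LineDeriv
open LineDeriv

variable {E : Type*} [NormedAddCommGroup E] [NormedSpace ℝ E]

theorem lineDerivOp_comm (a b : E) (f : 𝓢(E, ℂ)) :
    (∂_{a} (∂_{b} f : 𝓢(E, ℂ)) : 𝓢(E, ℂ)) = ∂_{b} (∂_{a} f : 𝓢(E, ℂ)) := by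
  have hsecond (x c d : E) :
      (∂_{c} (∂_{d} f : 𝓢(E, ℂ)) : 𝓢(E, ℂ)) x = fderiv ℝ (fderiv ℝ f) x c d := by
    have hd : DifferentiableAt ℝ (fderiv ℝ f) x :=
      ((fderivCLM ℝ E ℂ f).hasFDerivAt x).differentiableAt
    have hcoe : ⇑(∂_{d} f : 𝓢(E, ℂ)) = fun z => fderiv ℝ f z d := rfl
    rw [lineDerivOp_apply_eq_fderiv, hcoe, fderiv_clm_apply hd (differentiableAt_const d)]
    simp
  ext x
  rw [hsecond, hsecond]
  exact second_derivative_symmetric (fun y => f.hasFDerivAt y)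
    ((fderivCLM ℝ E ℂ f).hasFDerivAt x) a b

theorem lineDerivOp_iteratedLineDerivOp_comm (a : E) {l : ℕ} (v : Fin l → E) (f : 𝓢(E, ℂ)) :
    (∂_{a} (∂^{v} f : 𝓢(E, ℂ)) : 𝓢(E, ℂ)) = ∂^{v} (∂_{a} f : 𝓢(E, ℂ)) := by
  induction l with
  | zero => simp
  | succ l ih =>
    rw [iteratedLineDerivOp_succ_left, iteratedLineDerivOp_succ_left, lineDerivOp_comm, ih]

/-- The reflected function `y ↦ g (x - y)`. -/
noncomputable def reflectAt (g : 𝓢(E, ℂ)) (x : E) : 𝓢(E, ℂ) :=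
  (compCLMOfContinuousLinearEquiv ℂ (ContinuousLinearEquiv.neg ℝ) g).compSubConstCLM ℂ x

theorem reflectAt_apply (g : 𝓢(E, ℂ)) (x y : E) : reflectAt g x y = g (x - y) := by
  simp [reflectAt]

theorem lineDerivOp_reflectAt_apply (g : 𝓢(E, ℂ)) (x v y : E) :
    (∂_{v} (reflectAt g x) : 𝓢(E, ℂ)) y = -(∂_{v} g : 𝓢(E, ℂ)) (x - y) := by
  have hcoe : ⇑(reflectAt g x) = g ∘ (x - ·) := funext (reflectAt_apply g x)
  have hderiv := ((g.hasFDerivAt (x - y)).comp y ((hasFDerivAt_id y).const_sub x)).fderiv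
  rw [lineDerivOp_apply_eq_fderiv, lineDerivOp_apply_eq_fderiv, hcoe]
  simpa using congrArg (fun L => L v) hderiv

variable [FiniteDimensional ℝ E] [MeasurableSpace E] [BorelSpace E] (μ : Measure E)
  [μ.IsAddHaarMeasure]

theorem integral_mul_lineDerivOp_reflect (f g : 𝓢(E, ℂ)) (x v : E) :
    ∫ y, f y * (∂_{v} g : 𝓢(E, ℂ)) (x - y) ∂μ = ∫ y, (∂_{v} f : 𝓢(E, ℂ)) y * g (x - y) ∂μ := by
  simpa [reflectAt_apply, lineDerivOp_reflectAt_apply, integral_neg] using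
    integral_mul_lineDerivOp_right_eq_neg_left (μ := μ) f (reflectAt g x) v

theorem integral_mul_iteratedLineDerivOp_reflect (f g : 𝓢(E, ℂ)) (x : E) {l : ℕ}
    (v : Fin l → E) :
    ∫ y, f y * (∂^{v} g : 𝓢(E, ℂ)) (x - y) ∂μ = ∫ y, (∂^{v} f : 𝓢(E, ℂ)) y * g (x - y) ∂μ := by
  induction l generalizing f g with
  | zero => simp
  | succ l ih =>
    rw [iteratedLineDerivOp_succ_left, integral_mul_lineDerivOp_reflect, ih,
      iteratedLineDerivOp_succ_left, lineDerivOp_iteratedLineDerivOp_comm]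

theorem integral_mul_iteratedFDeriv_reflect (f g : 𝓢(E, ℂ)) (x : E) {l : ℕ} (v : Fin l → E) :
    ∫ y, f y * iteratedFDeriv ℝ l g (x - y) v ∂μ =
      ∫ y, g y * iteratedFDeriv ℝ l f (x - y) v ∂μ := by
  simp_rw [← iteratedLineDerivOp_eq_iteratedFDeriv]
  rw [integral_mul_iteratedLineDerivOp_reflect, ← integral_sub_left_eq_self _ μ x]
  simp [mul_comm]

end ReflectedIntegration

section WeightedDerivatives

open scoped BoundedContinuousFunction

variable {E : Type*} [NormedAddCommGroup E]

theorem one_add_norm_le_mul_one_add_norm_sub (x y : E) :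
    1 + ‖x‖ ≤ (1 + ‖y‖) * (1 + ‖x - y‖) := by
  have : ‖x‖ ≤ ‖x - y‖ + ‖y‖ := by simpa using norm_add_le (x - y) y
  nlinarith [norm_nonneg y, norm_nonneg (x - y)]

variable [NormedSpace ℝ E]

/-- The metric found by instance search is not reducibly the one underlying the norm, which would
leave `E →ᵇ (E [×l]→L[ℝ] ℂ)` without the instances needed for Bochner integration. -/
noncomputable local instance (l : ℕ) : PseudoMetricSpace (E [×l]→L[ℝ] ℂ) :=
  NormedAddCommGroup.toSeminormedAddCommGroup.toPseudoMetricSpace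

theorem norm_one_add_pow_smul_iteratedFDeriv_le (k l : ℕ) (f : 𝓢(E, ℂ)) (x : E) :
    ‖(1 + ‖x‖) ^ k • iteratedFDeriv ℝ l f x‖ ≤
      2 ^ k * (Finset.Iic (k, l)).sup (schwartzSeminormFamily ℂ E ℂ) f := by
  rw [norm_smul, Real.norm_of_nonneg (by positivity)]
  exact one_add_le_sup_seminorm_apply (𝕜 := ℂ) (m := (k, l)) le_rfl le_rfl f x

/-- The bounded continuous function `x ↦ (1 + ‖x‖)ᵏ Dˡf(x)` attached to a Schwartz function. -/
noncomputable def weightedDeriv (k l : ℕ) (f : 𝓢(E, ℂ)) : E →ᵇ (E [×l]→L[ℝ] ℂ) :=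
  BoundedContinuousFunction.ofNormedAddCommGroup
    (fun x => (1 + ‖x‖) ^ k • iteratedFDeriv ℝ l f x)
    (((continuous_const.add continuous_norm).pow k).smul
      ((f.smooth ⊤).continuous_iteratedFDeriv (mod_cast le_top)))
    _ (norm_one_add_pow_smul_iteratedFDeriv_le k l f)

/-- `weightedDeriv k l` as a continuous linear map. As `k` and `l` vary these maps to Banach spaces
induce the topology of `𝓢(E, ℂ)`, and Bochner integrals are available in their codomains. -/
noncomputable def weightedDerivCLM (k l : ℕ) : 𝓢(E, ℂ) →L[ℂ] (E →ᵇ (E [×l]→L[ℝ] ℂ)) :=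
  SchwartzMap.mkCLMtoNormedSpace (σ := RingHom.id ℂ) (D := E) (E := ℂ)
    (G := E →ᵇ (E [×l]→L[ℝ] ℂ)) (weightedDeriv k l)
    (fun f g => by
      ext1 x
      have hadd : iteratedFDeriv ℝ l (f + g) x = iteratedFDeriv ℝ l f x + iteratedFDeriv ℝ l g x :=
        iteratedFDeriv_add_apply (f.contDiffAt _) (g.contDiffAt _)
      exact (congrArg _ hadd).trans (smul_add _ _ _))
    (fun a f => by
      ext1 x
      have hsmul : iteratedFDeriv ℝ l (a • f) x = a • iteratedFDeriv ℝ l f x :=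
        iteratedFDeriv_const_smul_apply (f.contDiffAt _)
      exact (congrArg _ hsmul).trans (smul_comm _ _ _))
    ⟨Finset.Iic (k, l), 2 ^ k, by positivity, fun f =>
      BoundedContinuousFunction.norm_ofNormedAddCommGroup_le _ (by positivity)
        (norm_one_add_pow_smul_iteratedFDeriv_le k l f)⟩

theorem weightedDerivCLM_apply (k l : ℕ) (f : 𝓢(E, ℂ)) (x : E) :
    weightedDerivCLM k l f x = (1 + ‖x‖) ^ k • iteratedFDeriv ℝ l f x := rfl

theorem one_add_norm_pow_mul_le_norm_weightedDerivCLM (k l : ℕ) (f : 𝓢(E, ℂ)) (x : E) :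
    (1 + ‖x‖) ^ k * ‖iteratedFDeriv ℝ l f x‖ ≤ ‖weightedDerivCLM k l f‖ := by
  have h := (weightedDerivCLM k l f).norm_coe_le_norm x
  rwa [weightedDerivCLM_apply, norm_smul, Real.norm_of_nonneg (by positivity)] at h

theorem seminorm_le_norm_weightedDerivCLM (k l : ℕ) (f : 𝓢(E, ℂ)) :
    SchwartzMap.seminorm ℂ k l f ≤ ‖weightedDerivCLM k l f‖ := by
  refine seminorm_le_bound ℂ k l _ (norm_nonneg (weightedDerivCLM k l f)) fun x => ?_
  refine le_trans ?_ (one_add_norm_pow_mul_le_norm_weightedDerivCLM k l f x)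
  gcongr
  linarith

theorem norm_weightedDerivCLM_compSubConst_le (k l : ℕ) (g : 𝓢(E, ℂ)) (y : E) :
    ‖weightedDerivCLM k l (g.compSubConstCLM ℂ y)‖ ≤ (1 + ‖y‖) ^ k * ‖weightedDerivCLM k l g‖ := by
  refine (BoundedContinuousFunction.norm_le (by positivity)).2 fun x => ?_
  rw [weightedDerivCLM_apply, norm_smul, Real.norm_of_nonneg (by positivity),
    iteratedFDeriv_compSubConst]
  calc (1 + ‖x‖) ^ k * ‖iteratedFDeriv ℝ l g (x - y)‖
      ≤ ((1 + ‖y‖) * (1 + ‖x - y‖)) ^ k * ‖iteratedFDeriv ℝ l g (x - y)‖ := by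
        gcongr
        exact one_add_norm_le_mul_one_add_norm_sub x y
    _ = (1 + ‖y‖) ^ k * ((1 + ‖x - y‖) ^ k * ‖iteratedFDeriv ℝ l g (x - y)‖) := by
        rw [mul_pow, mul_assoc]
    _ ≤ _ := by
        gcongr
        exact one_add_norm_pow_mul_le_norm_weightedDerivCLM k l g (x - y)

/-- Finitely many of the maps `weightedDerivCLM k l`, bundled into one map to a Banach space. -/
noncomputable def weightedJetCLM (s : Finset (ℕ × ℕ)) :
    𝓢(E, ℂ) →L[ℂ] ∀ i : s, E →ᵇ (E [×i.1.2]→L[ℝ] ℂ) :=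
  ContinuousLinearMap.pi fun i => weightedDerivCLM i.1.1 i.1.2

theorem mem_closure_of_forall_weightedJetCLM {T : Set 𝓢(E, ℂ)} {f : 𝓢(E, ℂ)}
    (h : ∀ s, weightedJetCLM s f ∈ closure (weightedJetCLM s '' T)) : f ∈ closure T := by
  rw [mem_closure_iff_nhds_basis ((schwartz_withSeminorms ℂ E ℂ).hasBasis_ball (x := f))]
  rintro ⟨s, r⟩ hr
  obtain ⟨_, ⟨g, hg, rfl⟩, hfg⟩ := Metric.mem_closure_iff.1 (h s) r hr
  refine ⟨g, hg, ?_⟩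
  rw [Seminorm.mem_ball, map_sub_rev]
  refine (Seminorm.finset_sup_apply_le dist_nonneg fun i hi => ?_).trans_lt hfg
  calc SchwartzMap.seminorm ℂ i.1 i.2 (f - g)
      ≤ ‖weightedDerivCLM i.1 i.2 (f - g)‖ := seminorm_le_norm_weightedDerivCLM _ _ _
    _ = dist (weightedDerivCLM i.1 i.2 f) (weightedDerivCLM i.1 i.2 g) := by
        rw [map_sub, dist_eq_norm]
    _ ≤ _ := dist_le_pi_dist (weightedJetCLM s f) (weightedJetCLM s g) ⟨i, hi⟩

variable [FiniteDimensional ℝ E] [MeasurableSpace E] [BorelSpace E] (μ : Measure E)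
  [μ.IsAddHaarMeasure]

theorem integrable_smul_weightedDerivCLM (k l : ℕ) (f g : 𝓢(E, ℂ)) :
    Integrable (fun y => f y • weightedDerivCLM k l (g.compSubConstCLM ℂ y)) μ := by
  have hcont : Continuous fun y => f y • weightedDerivCLM k l (g.compSubConstCLM ℂ y) :=
    f.continuous.smul ((weightedDerivCLM k l).continuous.comp (continuous_compSubConst g))
  have hbound : Integrable
      (fun y => 2 ^ (k - 1) * (‖f y‖ + ‖y‖ ^ k * ‖f y‖) * ‖weightedDerivCLM k l g‖) μ :=
    ((f.integrable.norm.add (f.integrable_pow_mul μ k)).const_mul _).mul_const _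
  refine hbound.mono' hcont.aestronglyMeasurable (.of_forall fun y => ?_)
  rw [norm_smul]
  calc ‖f y‖ * ‖weightedDerivCLM k l (g.compSubConstCLM ℂ y)‖
      ≤ ‖f y‖ * ((1 + ‖y‖) ^ k * ‖weightedDerivCLM k l g‖) := by
        gcongr
        exact norm_weightedDerivCLM_compSubConst_le k l g y
    _ ≤ ‖f y‖ * ((2 ^ (k - 1) * (1 ^ k + ‖y‖ ^ k)) * ‖weightedDerivCLM k l g‖) := by
        gcongr
        exact add_pow_le zero_le_one (norm_nonneg _) k
    _ = _ := by
        rw [one_pow]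
        ring

/-- Both sides are `weightedDerivCLM k l` of the convolution `f ⋆ g`. -/
theorem integral_smul_weightedDerivCLM_comm (k l : ℕ) (f g : 𝓢(E, ℂ)) :
    ∫ y, f y • weightedDerivCLM k l (g.compSubConstCLM ℂ y) ∂μ =
      ∫ y, g y • weightedDerivCLM k l (f.compSubConstCLM ℂ y) ∂μ := by
  ext x v
  let ev : (E →ᵇ (E [×l]→L[ℝ] ℂ)) →L[ℝ] ℂ :=
    ContinuousMultilinearMap.apply ℝ (fun _ : Fin l => E) ℂ v ∘L
      BoundedContinuousFunction.evalCLM ℝ x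
  have hev (f g : 𝓢(E, ℂ)) : ev (∫ y, f y • weightedDerivCLM k l (g.compSubConstCLM ℂ y) ∂μ) =
      (1 + ‖x‖) ^ k • ∫ y, f y * iteratedFDeriv ℝ l g (x - y) v ∂μ := by
    rw [← ev.integral_comp_comm (integrable_smul_weightedDerivCLM μ k l f g), ← integral_smul]
    congr 1 with y
    change f y • (1 + ‖x‖) ^ k • iteratedFDeriv ℝ l (g.compSubConstCLM ℂ y) x v = _
    rw [iteratedFDeriv_compSubConst, smul_comm, smul_eq_mul]
  change ev _ = ev _
  rw [hev, hev, integral_mul_iteratedFDeriv_reflect]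

theorem integrable_smul_weightedJetCLM (s : Finset (ℕ × ℕ)) (f g : 𝓢(E, ℂ)) :
    Integrable (fun y => f y • weightedJetCLM s (g.compSubConstCLM ℂ y)) μ :=
  Integrable.of_eval fun i => integrable_smul_weightedDerivCLM μ i.1.1 i.1.2 f g

theorem integral_smul_weightedJetCLM_comm (s : Finset (ℕ × ℕ)) (f g : 𝓢(E, ℂ)) :
    ∫ y, f y • weightedJetCLM s (g.compSubConstCLM ℂ y) ∂μ =
      ∫ y, g y • weightedJetCLM s (f.compSubConstCLM ℂ y) ∂μ := by
  ext1 i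
  rw [eval_integral fun i => (integrable_smul_weightedJetCLM μ s f g).eval i,
    eval_integral fun i => (integrable_smul_weightedJetCLM μ s g f).eval i]
  exact integral_smul_weightedDerivCLM_comm μ i.1.1 i.1.2 f g

theorem dense_of_forall_compSubConst_mem (S : Submodule ℂ 𝓢(E, ℂ))
    (htrans : ∀ φ ∈ S, ∀ y, φ.compSubConstCLM ℂ y ∈ S)
    (hbump : ∀ δ > 0, ∃ φ ∈ S, (∀ y, φ y ≠ 0 → ‖y‖ < δ) ∧ ∫ y, φ y ∂μ = 1 ∧
      ∫ y, ‖φ y‖ ∂μ = 1) : Dense (S : Set 𝓢(E, ℂ)) := by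
  intro f
  refine mem_closure_of_forall_weightedJetCLM fun s => ?_
  let T := (S.map (weightedJetCLM s).toLinearMap).topologicalClosure
  have hcont : Continuous fun y => weightedJetCLM s (f.compSubConstCLM ℂ y) :=
    (weightedJetCLM s).continuous.comp (continuous_compSubConst f)
  suffices weightedJetCLM s f ∈ closure (T : Set (∀ i : s, _)) by
    rwa [(Submodule.isClosed_topologicalClosure _).closure_eq] at this
  refine Metric.mem_closure_iff.2 fun ε hε => ?_
  obtain ⟨δ, hδ, hclose⟩ := Metric.continuousAt_iff.1 (hcont.continuousAt (x := 0)) (ε / 2)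
    (half_pos hε)
  obtain ⟨φ, hφS, hsupp, hint, hnorm⟩ := hbump δ hδ
  have hmem (y : E) : f y • weightedJetCLM s (φ.compSubConstCLM ℂ y) ∈ T :=
    T.smul_mem _ (Submodule.le_topologicalClosure _
      (Submodule.mem_map_of_mem (htrans φ hφS y)))
  refine ⟨∫ y, f y • weightedJetCLM s (φ.compSubConstCLM ℂ y) ∂μ,
    integral_mem_of_isClosed (S := T.restrictScalars ℝ)
      (Submodule.isClosed_topologicalClosure _) hmem, ?_⟩
  rw [integral_smul_weightedJetCLM_comm, dist_comm, dist_eq_norm]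
  refine (norm_integral_smul_sub_le φ.integrable (integrable_smul_weightedJetCLM μ s φ f)
    hint hnorm fun y hy => ?_).trans_lt (half_lt_self hε)
  have h := hclose (show dist y 0 < δ by simpa using hsupp y hy)
  rw [compSubConstCLM_zero, ContinuousLinearMap.id_apply, dist_eq_norm] at h
  exact h.le

end WeightedDerivatives

section Bumps

variable {E : Type*} [NormedAddCommGroup E] [NormedSpace ℝ E] [FiniteDimensional ℝ E]
  [MeasurableSpace E] [BorelSpace E] (μ : Measure E) [μ.IsAddHaarMeasure]

theorem exists_schwartz_bump {δ : ℝ} (hδ : 0 < δ) :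
    ∃ ρ : 𝓢(E, ℂ), (∀ y, ρ y ≠ 0 → ‖y‖ < δ) ∧ ∫ y, ρ y ∂μ = 1 ∧ ∫ y, ‖ρ y‖ ∂μ = 1 := by
  let b : ContDiffBump (0 : E) := ⟨δ / 2, δ, half_pos hδ, half_lt_self hδ⟩
  have hsupp : HasCompactSupport fun y => (b.normed μ y : ℂ) :=
    b.hasCompactSupport_normed.comp_left (g := fun r : ℝ => (r : ℂ)) Complex.ofReal_zero
  refine ⟨hsupp.toSchwartzMap (Complex.ofRealCLM.contDiff.comp b.contDiff_normed),
    fun y hy => ?_, ?_, ?_⟩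
  · have hy' : y ∈ Function.support (b.normed μ) := Complex.ofReal_ne_zero.1 hy
    simpa [b.support_normed_eq] using hy'
  · exact integral_complex_ofReal.trans (by rw [b.integral_normed, Complex.ofReal_one])
  · calc ∫ y, ‖(b.normed μ y : ℂ)‖ ∂μ = ∫ y, b.normed μ y ∂μ := by
          simp only [Complex.norm_real, Real.norm_of_nonneg (b.nonneg_normed _)]
      _ = 1 := b.integral_normed

theorem exists_pureTensor_bump {ι : Type*} [Fintype ι] {δ : ℝ} (hδ : 0 < δ) :
    ∃ ρ : ι → 𝓢(E, ℂ), (∀ y, pureTensor ρ y ≠ 0 → ‖y‖ < δ) ∧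
      ∫ y, pureTensor ρ y ∂(Measure.pi fun _ => μ) = 1 ∧
      ∫ y, ‖pureTensor ρ y‖ ∂(Measure.pi fun _ => μ) = 1 := by
  obtain ⟨ρ, hsupp, hint, hnorm⟩ := exists_schwartz_bump μ hδ
  refine ⟨fun _ => ρ, fun y hy => (pi_norm_lt_iff hδ).2 fun i => hsupp _ ?_, ?_, ?_⟩
  · rw [pureTensor_apply] at hy
    exact Finset.prod_ne_zero_iff.1 hy i (Finset.mem_univ i)
  · simp only [pureTensor_apply]
    rw [integral_fintype_prod_eq_prod fun (_ : ι) y => ρ y]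
    simp [hint]
  · simp only [pureTensor_apply, norm_prod]
    rw [integral_fintype_prod_eq_prod fun (_ : ι) y => ‖ρ y‖]
    simp [hnorm]

end Bumps

section TensorDensity

variable {n : ℕ}

theorem isTensor_pureTensor (f : Fin n → 𝓢(ℝ, ℂ)) : IsTensor f (pureTensor f) := fun _ => rfl

theorem IsTensor.compSubConst {f : Fin n → 𝓢(ℝ, ℂ)} {F : 𝓢(Fin n → ℝ, ℂ)} (hF : IsTensor f F)
    (y : Fin n → ℝ) :
    IsTensor (fun i => (f i).compSubConstCLM ℂ (y i)) (F.compSubConstCLM ℂ y) :=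
  fun x => by simp [hF (x - y)]

/-- The algebraic tensor power `𝓢(ℝ)^{⊗n}` inside `𝓢(ℝ^n)`: the span of the pure tensors. -/
noncomputable def tensorSpan (n : ℕ) : Submodule ℂ 𝓢(Fin n → ℝ, ℂ) :=
  Submodule.span ℂ {F | ∃ f, IsTensor f F}

theorem compSubConst_mem_tensorSpan {F : 𝓢(Fin n → ℝ, ℂ)} (hF : F ∈ tensorSpan n)
    (y : Fin n → ℝ) : F.compSubConstCLM ℂ y ∈ tensorSpan n := by
  have hle : tensorSpan n ≤ (tensorSpan n).comap (compSubConstCLM ℂ y).toLinearMap :=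
    Submodule.span_le.2 fun _ ⟨_, hf⟩ => Submodule.subset_span ⟨_, hf.compSubConst y⟩
  exact hle hF

theorem dense_tensorSpan (n : ℕ) : Dense (tensorSpan n : Set 𝓢(Fin n → ℝ, ℂ)) :=
  dense_of_forall_compSubConst_mem volume (tensorSpan n)
    (fun _ hφ y => compSubConst_mem_tensorSpan hφ y) fun _ hδ =>
    have ⟨ρ, hρ⟩ := exists_pureTensor_bump (ι := Fin n) volume hδ
    ⟨pureTensor ρ, Submodule.subset_span ⟨ρ, isTensor_pureTensor ρ⟩, hρ⟩

theorem clm_ext_tensor {u v : 𝓢(Fin n → ℝ, ℂ) →L[ℂ] ℂ} (h : ∀ f F, IsTensor f F → u F = v F) :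
    u = v :=
  ContinuousLinearMap.ext_on (dense_tensorSpan n) fun F ⟨f, hf⟩ => h f F hf

theorem DVO.ext_tensor {E E' : DVO n}
    (h : ∀ f g F G, IsTensor f F → IsTensor g G → E F G = E' F G) : E = E' := by
  let ev (B : DVO n) (G : 𝓢(Fin n → ℝ, ℂ)) : 𝓢(Fin n → ℝ, ℂ) →L[ℂ] ℂ :=
    ⟨B.toLinearMap₁₂.flip G, continuous_bilin_apply B continuous_id continuous_const⟩
  have hev (g G) (hG : IsTensor g G) : ev E G = ev E' G :=
    clm_ext_tensor fun f F hF => h f g F G hF hG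
  ext F : 1
  exact clm_ext_tensor fun g G hG => DFunLike.congr_fun (hev g G hG) F

theorem IsExtension.unique {k N : ℕ} {A : DVO k} {ℓ : Fin k → Fin N} {E E' : DVO N}
    (h : IsExtension k N A ℓ E) (h' : IsExtension k N A ℓ E') : E = E' :=
  DVO.ext_tensor fun f g F G hF hG => by
    have hF' := isTensor_pureTensor fun a => f (ℓ a)
    have hG' := isTensor_pureTensor fun a => g (ℓ a)
    rw [h f g F G _ _ hF hG hF' hG', h' f g F G _ _ hF hG hF' hG']

end TensorDensity

section BoundedConvergence

open Topology Bornology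

variable {𝕜 E F G H : Type*} [NontriviallyNormedField 𝕜]
  [AddCommGroup E] [Module 𝕜 E] [TopologicalSpace E]
  [AddCommGroup F] [Module 𝕜 F] [TopologicalSpace F]
  [NormedAddCommGroup G] [NormedSpace 𝕜 G]
  [AddCommGroup H] [Module 𝕜 H] [TopologicalSpace H] [IsTopologicalAddGroup H]

theorem eventually_norm_bilin_apply_le {s : Set E} {t : Set F} (hs : IsVonNBounded 𝕜 s)
    (ht : IsVonNBounded 𝕜 t) {ε : ℝ} (hε : 0 < ε) :
    ∀ᶠ A : E →L[𝕜] F →L[𝕜] G in 𝓝 0, ∀ x ∈ s, ∀ y ∈ t, ‖A x y‖ ≤ ε := by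
  filter_upwards [ContinuousLinearMap.eventually_nhds_zero_mapsTo hs
    (ContinuousLinearMap.eventually_nhds_zero_mapsTo ht (Metric.closedBall_mem_nhds 0 hε))]
    with A hA x hx y hy
  simpa using hA hx hy

theorem continuous_of_eventually_norm_bilin_apply_lt (T : H →ₗ[𝕜] E →L[𝕜] F →L[𝕜] G)
    (hT : ∀ s t, IsVonNBounded 𝕜 s → IsVonNBounded 𝕜 t → ∀ ε > 0,
      ∀ᶠ a in 𝓝 0, ∀ x ∈ s, ∀ y ∈ t, ‖T a x y‖ < ε) : Continuous T := by
  refine continuous_of_continuousAt_zero T ?_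
  rw [ContinuousAt, map_zero]
  refine (ContinuousLinearMap.hasBasis_nhds_zero_of_basis
    (ContinuousLinearMap.hasBasis_nhds_zero_of_basis
      Metric.nhds_basis_ball)).tendsto_right_iff.2 ?_
  rintro ⟨s, t, ε⟩ ⟨hs, ht, hε⟩
  filter_upwards [hT s t hs ht ε hε] with a ha x hx y hy
  simpa using ha x hx y hy

theorem exists_norm_bilin_apply_le [IsTopologicalAddGroup F] [ContinuousSMul 𝕜 F]
    (A : E →L[𝕜] F →L[𝕜] G) {s : Set E} {t : Set F}
    (hs : IsVonNBounded 𝕜 s) (ht : IsVonNBounded 𝕜 t) :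
    ∃ K : ℝ, ∀ x ∈ s, ∀ y ∈ t, ‖A x y‖ ≤ K := by
  obtain ⟨K, hK⟩ := isBounded_iff_forall_norm_le.1 ((NormedSpace.isVonNBounded_iff 𝕜).1
    (ContinuousLinearMap.isVonNBounded_image2_apply (R := 𝕜) (hs.image A) ht))
  exact ⟨K, fun x hx y hy => hK _ ⟨_, ⟨x, hx, rfl⟩, y, hy, rfl⟩⟩

end BoundedConvergence

section Slices

open Bornology

variable {V W : Type*} [NormedAddCommGroup V] [NormedSpace ℝ V] [NormedAddCommGroup W]
  [NormedSpace ℝ W]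

/-- The slice `z ↦ F (z, y)` of a Schwartz function `F` on `V × W`. -/
noncomputable def slice (y : W) : 𝓢(V × W, ℂ) →L[ℂ] 𝓢(V, ℂ) :=
  SchwartzMap.compCLM ℂ (g := fun z => ContinuousLinearMap.inl ℝ V W z + (0, y))
    ((ContinuousLinearMap.inl ℝ V W).hasTemperateGrowth.add (.const _))
    ⟨1, 1, fun z => by simpa using (le_max_left _ _).trans (le_add_of_nonneg_left zero_le_one)⟩

theorem slice_apply (y : W) (F : 𝓢(V × W, ℂ)) (z : V) : slice y F z = F (z, y) := by
  simp [slice]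

theorem continuous_slice (F : 𝓢(V × W, ℂ)) : Continuous fun y => slice y F := by
  have htrans (y : W) : slice y F = slice 0 (F.compSubConstCLM ℂ (-(0, y))) := by
    ext z
    simp [slice_apply]
  simp only [htrans]
  exact (slice 0).continuous.comp ((continuous_compSubConst F).comp (by fun_prop))

theorem seminorm_smul_slice_le (r a b : ℕ) (y : W) (F : 𝓢(V × W, ℂ)) :
    SchwartzMap.seminorm ℂ a b (((1 + ‖y‖) ^ r : ℝ) • slice y F) ≤
      2 ^ (a + r) * (Finset.Iic (a + r, b)).sup (schwartzSeminormFamily ℂ (V × W) ℂ) F := by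
  refine seminorm_le_bound ℂ a b _ (by positivity) fun z => ?_
  let p := ContinuousLinearMap.inl ℝ V W z + (0, y)
  have hp : p = (z, y) := by simp [p]
  have hz : ‖z‖ ≤ 1 + ‖p‖ := by
    rw [hp]
    linarith [norm_fst_le (z, y)]
  have hy : ‖y‖ ≤ ‖p‖ := hp ▸ norm_snd_le (z, y)
  have hderiv : ‖iteratedFDeriv ℝ b (slice y F) z‖ ≤ ‖iteratedFDeriv ℝ b F p‖ :=
    norm_iteratedFDeriv_comp_affine_le (F.smooth b) _
      (ContinuousLinearMap.norm_inl_le_one ℝ V W) _ z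
  have hsmul : iteratedFDeriv ℝ b (((1 + ‖y‖) ^ r : ℝ) • slice y F : 𝓢(V, ℂ)) z =
      ((1 + ‖y‖) ^ r : ℝ) • iteratedFDeriv ℝ b (slice y F) z :=
    iteratedFDeriv_const_smul_apply ((slice y F).contDiffAt _)
  rw [hsmul, norm_smul, Real.norm_of_nonneg (by positivity)]
  calc ‖z‖ ^ a * ((1 + ‖y‖) ^ r * ‖iteratedFDeriv ℝ b (slice y F) z‖)
      ≤ (1 + ‖p‖) ^ a * ((1 + ‖p‖) ^ r * ‖iteratedFDeriv ℝ b F p‖) := by gcongr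
    _ = (1 + ‖p‖) ^ (a + r) * ‖iteratedFDeriv ℝ b F p‖ := by rw [pow_add, mul_assoc]
    _ ≤ _ := one_add_le_sup_seminorm_apply (𝕜 := ℂ) (m := (a + r, b)) le_rfl le_rfl F p

/-- The slices of the members of `s`, multiplied by the weight `(1 + ‖y‖) ^ r`. -/
def weightedSlices (r : ℕ) (s : Set 𝓢(V × W, ℂ)) : Set 𝓢(V, ℂ) :=
  Set.image2 (fun (y : W) F => ((1 + ‖y‖) ^ r : ℝ) • slice y F) Set.univ s

theorem isVonNBounded_weightedSlices (r : ℕ) {s : Set 𝓢(V × W, ℂ)} (hs : IsVonNBounded ℂ s) :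
    IsVonNBounded ℂ (weightedSlices r s) := by
  refine ((schwartz_withSeminorms ℂ V ℂ).isVonNBounded_iff_seminorm_bounded).2 fun ⟨a, b⟩ => ?_
  obtain ⟨c, hc₀, hc⟩ := ((schwartz_withSeminorms ℂ (V × W)
    ℂ).isVonNBounded_iff_finset_seminorm_bounded).1 hs (Finset.Iic (a + r, b))
  refine ⟨2 ^ (a + r) * c, by positivity, ?_⟩
  rintro _ ⟨y, -, F, hF, rfl⟩
  refine (seminorm_smul_slice_le r a b y F).trans_lt ?_
  gcongr
  exact hc F hF

end Slices

section Ampliation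

open Bornology

/-- Distribution-valued operators `𝓢(V) → 𝓢'(V)`; thus `DVO n` is `SchwartzForm (Fin n → ℝ)`. -/
abbrev SchwartzForm (V : Type*) [NormedAddCommGroup V] [NormedSpace ℝ V] : Type _ :=
  𝓢(V, ℂ) →L[ℂ] 𝓢(V, ℂ) →L[ℂ] ℂ

variable {V W : Type*} [NormedAddCommGroup V] [NormedSpace ℝ V] [NormedAddCommGroup W]
  [NormedSpace ℝ W]

/-- The weight is moved into the first argument of `A`. -/
theorem norm_apply_slice_le {A : SchwartzForm V} {K : ℝ} {s t : Set 𝓢(V × W, ℂ)} {r : ℕ}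
    (hK : ∀ f ∈ weightedSlices r s, ∀ g ∈ weightedSlices 0 t, ‖A f g‖ ≤ K)
    {F G : 𝓢(V × W, ℂ)} (hF : F ∈ s) (hG : G ∈ t) (y : W) :
    ‖A (slice y F) (slice y G)‖ ≤ K * (1 + ‖y‖) ^ (-(r : ℝ)) := by
  have h := hK _ ⟨y, trivial, F, hF, rfl⟩ _ ⟨y, trivial, G, hG, rfl⟩
  have hsmul : A (((1 + ‖y‖) ^ r : ℝ) • slice y F) = ((1 + ‖y‖) ^ r : ℝ) • A (slice y F) :=
    A.map_smul_of_tower _ _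
  simp only [pow_zero, one_smul, hsmul, _root_.smul_apply, norm_smul, norm_pow] at h
  rw [Real.norm_of_nonneg (by positivity)] at h
  rw [Real.rpow_neg (by positivity), Real.rpow_natCast, ← div_eq_mul_inv,
    le_div_iff₀' (by positivity)]
  exact h

variable [MeasurableSpace W] (μ : Measure W) [μ.HasTemperateGrowth]

theorem norm_integral_apply_slice_le {A : SchwartzForm V} {K : ℝ} {s t : Set 𝓢(V × W, ℂ)}
    (hK : ∀ f ∈ weightedSlices μ.integrablePower s, ∀ g ∈ weightedSlices 0 t, ‖A f g‖ ≤ K)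
    {F G : 𝓢(V × W, ℂ)} (hF : F ∈ s) (hG : G ∈ t) :
    ‖∫ y, A (slice y F) (slice y G) ∂μ‖ ≤
      K * ∫ y, (1 + ‖y‖) ^ (-(μ.integrablePower : ℝ)) ∂μ := by
  rw [← integral_const_mul]
  exact norm_integral_le_of_norm_le (μ.integrable_pow_neg_integrablePower.const_mul K)
    (.of_forall (norm_apply_slice_le hK hF hG))

variable [BorelSpace W]

theorem integrable_apply_slice (A : SchwartzForm V) (F G : 𝓢(V × W, ℂ)) :
    Integrable (fun y => A (slice y F) (slice y G)) μ := by
  obtain ⟨K, hK⟩ := exists_norm_bilin_apply_le A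
    (isVonNBounded_weightedSlices μ.integrablePower (isVonNBounded_singleton (𝕜 := ℂ) F))
    (isVonNBounded_weightedSlices 0 (isVonNBounded_singleton (𝕜 := ℂ) G))
  exact (μ.integrable_pow_neg_integrablePower.const_mul K).mono'
    (continuous_bilin_apply A (continuous_slice F) (continuous_slice G)).aestronglyMeasurable
    (.of_forall (norm_apply_slice_le hK rfl rfl))

/-- The ampliation `A ⊗ 1` of `A` from `V` to `V × W`: the operator `A` acts on the slices in `V`,
and the result is integrated over the passive variable in `W`. -/
noncomputable def ampliation (A : SchwartzForm V) : SchwartzForm (V × W) :=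
  clmOfLocallyBounded₂
    (LinearMap.mk₂ ℂ (fun F G => ∫ y, A (slice y F) (slice y G) ∂μ)
      (fun F F' G => by
        simpa using integral_add (integrable_apply_slice μ A F G) (integrable_apply_slice μ A F' G))
      (fun c F G => by simpa using integral_const_mul c fun y => A (slice y F) (slice y G))
      (fun F G G' => by
        simpa using integral_add (integrable_apply_slice μ A F G) (integrable_apply_slice μ A F G'))
      (fun c F G => by simpa using integral_const_mul c fun y => A (slice y F) (slice y G)))
    fun s t hs ht => by
      obtain ⟨K, hK⟩ := exists_norm_bilin_apply_le A
        (isVonNBounded_weightedSlices μ.integrablePower hs) (isVonNBounded_weightedSlices 0 ht)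
      refine (NormedSpace.isVonNBounded_iff ℂ).2 (isBounded_iff_forall_norm_le.2
        ⟨K * ∫ y, (1 + ‖y‖) ^ (-(μ.integrablePower : ℝ)) ∂μ, ?_⟩)
      rintro _ ⟨F, hF, G, hG, rfl⟩
      exact norm_integral_apply_slice_le μ hK hF hG

theorem ampliation_apply (A : SchwartzForm V) (F G : 𝓢(V × W, ℂ)) :
    ampliation μ A F G = ∫ y, A (slice y F) (slice y G) ∂μ :=
  clmOfLocallyBounded₂_apply _ _ F G

/-- The ampliation as a linear map in the operator; `ampliationCLM` adds continuity. -/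
noncomputable def ampliationₗ : SchwartzForm V →ₗ[ℂ] SchwartzForm (V × W) where
  toFun := ampliation μ
  map_add' A B := by
    ext F G
    simpa [ampliation_apply] using
      integral_add (integrable_apply_slice μ A F G) (integrable_apply_slice μ B F G)
  map_smul' c A := by
    ext F G
    simpa [ampliation_apply] using integral_const_mul c fun y => A (slice y F) (slice y G)

theorem continuous_ampliation : Continuous (ampliation μ : SchwartzForm V → _) := by
  refine continuous_of_eventually_norm_bilin_apply_lt (𝕜 := ℂ) (H := SchwartzForm V)
    (ampliationₗ μ) fun s t hs ht ε hε => ?_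
  set C := ∫ y, (1 + ‖y‖) ^ (-(μ.integrablePower : ℝ)) ∂μ
  have : 0 ≤ C := integral_nonneg fun y => by positivity
  filter_upwards [eventually_norm_bilin_apply_le
    (isVonNBounded_weightedSlices μ.integrablePower hs) (isVonNBounded_weightedSlices 0 ht)
    (show 0 < ε / (C + 1) by positivity)] with A hA F hF G hG
  calc ‖ampliation μ A F G‖ ≤ ε / (C + 1) * C := norm_integral_apply_slice_le μ hA hF hG
    _ < ε / (C + 1) * (C + 1) := by gcongr; exact lt_add_one C
    _ = ε := div_mul_cancel₀ _ (by positivity)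

/-- The ampliation as a continuous linear map in the operator. -/
noncomputable def ampliationCLM : SchwartzForm V →L[ℂ] SchwartzForm (V × W) :=
  ⟨ampliationₗ μ, continuous_ampliation μ⟩

end Ampliation

section Extension

variable {ι κ : Type*} (j : ι ↪ κ)

/-- The coordinates that are not selected by `j`. -/
abbrev PassiveIndex : Type _ := {m // m ∉ Set.range j}

open scoped Classical in
/-- The decomposition of the coordinates into those selected by `j` and the passive ones. -/
noncomputable def sumPassiveEquiv : ι ⊕ PassiveIndex j ≃ κ :=
  ((Equiv.ofInjective j j.injective).sumCongr (Equiv.refl _)).trans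
    (Equiv.Set.sumCompl (Set.range j))

@[simp]
theorem sumPassiveEquiv_inl (a : ι) : sumPassiveEquiv j (.inl a) = j a := rfl

@[simp]
theorem sumPassiveEquiv_inr (m : PassiveIndex j) : sumPassiveEquiv j (.inr m) = m := rfl

variable [Fintype ι] [Fintype κ]

noncomputable instance : Fintype (PassiveIndex j) := Fintype.ofFinite _

/-- The point of `ℝ^κ` with coordinates `z` along `j` and passive coordinates `y`, as a continuous
linear equivalence in `(z, y)`. -/
noncomputable def mergeCLE : ((ι → ℝ) × (PassiveIndex j → ℝ)) ≃L[ℝ] (κ → ℝ) :=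
  ((LinearEquiv.sumPiEquivProdPi ℝ ι (PassiveIndex j) fun _ => ℝ).symm ≪≫ₗ
    LinearEquiv.funCongrLeft ℝ ℝ (sumPassiveEquiv j).symm).toContinuousLinearEquiv

theorem mergeCLE_apply (x : (ι → ℝ) × (PassiveIndex j → ℝ)) (m : κ) :
    mergeCLE j x m = Sum.elim x.1 x.2 ((sumPassiveEquiv j).symm m) := by
  simp only [mergeCLE, LinearEquiv.coe_toContinuousLinearEquiv', LinearEquiv.trans_apply,
    LinearEquiv.funCongrLeft_apply, LinearMap.funLeft_apply]
  cases (sumPassiveEquiv j).symm m <;> rfl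

@[simp]
theorem mergeCLE_apply_active (x : (ι → ℝ) × (PassiveIndex j → ℝ)) (a : ι) :
    mergeCLE j x (j a) = x.1 a := by
  rw [mergeCLE_apply, ← sumPassiveEquiv_inl, Equiv.symm_apply_apply, Sum.elim_inl]

@[simp]
theorem mergeCLE_apply_passive (x : (ι → ℝ) × (PassiveIndex j → ℝ)) (m : PassiveIndex j) :
    mergeCLE j x m = x.2 m := by
  rw [mergeCLE_apply, ← sumPassiveEquiv_inr, Equiv.symm_apply_apply, Sum.elim_inr]

/-- The restriction of a Schwartz function to the variables selected by `j`, at fixed values `y`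
of the passive variables. -/
noncomputable def sliceAlong (y : PassiveIndex j → ℝ) : 𝓢(κ → ℝ, ℂ) →L[ℂ] 𝓢(ι → ℝ, ℂ) :=
  slice y ∘L compCLMOfContinuousLinearEquiv ℂ (mergeCLE j)

theorem sliceAlong_apply (y : PassiveIndex j → ℝ) (F : 𝓢(κ → ℝ, ℂ)) (z : ι → ℝ) :
    sliceAlong j y F z = F (mergeCLE j (z, y)) :=
  slice_apply y _ z

/-- The operator `A_j` acting as `A` in the variables selected by `j` and as the identity in the
passive ones, as a continuous linear function of `A`. -/
noncomputable def extensionCLM : SchwartzForm (ι → ℝ) →L[ℂ] SchwartzForm (κ → ℝ) :=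
  let pullback := compCLMOfContinuousLinearEquiv ℂ (F := ℂ) (mergeCLE j)
  ContinuousLinearMap.postcomp _ (ContinuousLinearMap.precomp ℂ pullback) ∘L
    ContinuousLinearMap.precomp _ pullback ∘L ampliationCLM volume

theorem extensionCLM_apply (A : SchwartzForm (ι → ℝ)) (F G : 𝓢(κ → ℝ, ℂ)) :
    extensionCLM j A F G = ∫ y, A (sliceAlong j y F) (sliceAlong j y G) := rfl

end Extension

section ParticleExtension

variable {k N : ℕ} {j : Fin k ↪ Fin N}

theorem IsTensor.sliceAlong {f : Fin N → 𝓢(ℝ, ℂ)} {F : 𝓢(Fin N → ℝ, ℂ)}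
    {F' : 𝓢(Fin k → ℝ, ℂ)} (hF : IsTensor f F) (hF' : IsTensor (fun a => f (j a)) F')
    (y : PassiveIndex j → ℝ) : sliceAlong j y F = (∏ m : PassiveIndex j, f m (y m)) • F' := by
  ext z
  rw [sliceAlong_apply, hF, _root_.smul_apply, hF', smul_eq_mul, mul_comm]
  rw [← (sumPassiveEquiv j).prod_comp, Fintype.prod_sum_type]
  simp

theorem isExtension_extensionCLM (A : DVO k) (j : Fin k ↪ Fin N) :
    IsExtension k N A j (extensionCLM j A) := by
  intro f g F G F' G' hF hG hF' hG'
  have hpassive : ∀ m, m ∈ Finset.univ \ Finset.image j Finset.univ ↔ m ∉ Set.range j := by simp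
  calc extensionCLM j A F G
      = ∫ y : PassiveIndex j → ℝ, A F' G' * ∏ m : PassiveIndex j, f m (y m) * g m (y m) := by
        simp only [extensionCLM_apply, hF.sliceAlong hF', hG.sliceAlong hG', map_smul,
          _root_.smul_apply, smul_eq_mul, Finset.prod_mul_distrib]
        congr 1 with y
        ring
    _ = A F' G' * ∏ m : PassiveIndex j, ∫ x, f m x * g m x := by
        rw [integral_const_mul, volume_pi,
          integral_fintype_prod_eq_prod fun (m : PassiveIndex j) x => f m x * g m x]
    _ = _ := by rw [Finset.prod_subtype _ hpassive]

theorem IsConjOf.sliceAlong {F Fc : 𝓢(Fin N → ℝ, ℂ)} (h : IsConjOf F Fc)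
    (y : PassiveIndex j → ℝ) : IsConjOf (sliceAlong j y F) (sliceAlong j y Fc) := fun z => by
  simp only [sliceAlong_apply, h _]

theorem IsSkewAdjointDVO.extensionCLM {A : DVO k} (hA : IsSkewAdjointDVO A)
    (j : Fin k ↪ Fin N) : IsSkewAdjointDVO (extensionCLM j A) := by
  intro F G Fc Gc hF hG
  simp only [extensionCLM_apply, ← integral_conj, ← integral_neg,
    hA _ _ _ _ (hF.sliceAlong _) (hG.sliceAlong _)]

end ParticleExtension

section Permutations

variable {n : ℕ}

theorem permCLM_apply (π : Equiv.Perm (Fin n)) (F : 𝓢(Fin n → ℝ, ℂ)) (x : Fin n → ℝ) :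
    permCLM n π F x = F (x ∘ π) := rfl

theorem IsBosonic.permCLM_eq {F : 𝓢(Fin n → ℝ, ℂ)} (hF : IsBosonic F)
    (π : Equiv.Perm (Fin n)) : permCLM n π F = F := by
  ext x
  exact hF π x

theorem IsTensor.permCLM {f : Fin n → 𝓢(ℝ, ℂ)} {F : 𝓢(Fin n → ℝ, ℂ)} (hF : IsTensor f F)
    (π : Equiv.Perm (Fin n)) : IsTensor (f ∘ π.symm) (permCLM n π F) := fun x => by
  rw [permCLM_apply, hF]
  exact Fintype.prod_equiv π _ _ fun m => by simp

variable {k N : ℕ}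

theorem IsExtension.permCLM {A : DVO k} {ℓ : Fin k → Fin N} {E : DVO N}
    (h : IsExtension k N A ℓ E) (π : Equiv.Perm (Fin N)) :
    IsExtension k N A (π.symm ∘ ℓ)
      (ContinuousLinearMap.precomp ℂ (permCLM N π) ∘L E ∘L permCLM N π) := by
  intro f g F G F' G' hF hG hF' hG'
  refine (h _ _ _ _ F' G' (hF.permCLM π) (hG.permCLM π) hF' hG').trans ?_
  congr 1
  exact Finset.prod_equiv π.symm (fun m => by simp [π.symm.injective.eq_iff]) fun _ _ => rfl

theorem extensionCLM_permCLM (A : DVO k) (j : Fin k ↪ Fin N) (π : Equiv.Perm (Fin N))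
    (F G : 𝓢(Fin N → ℝ, ℂ)) :
    extensionCLM j A (permCLM N π F) (permCLM N π G) =
      extensionCLM (j.trans π.symm.toEmbedding) A F G :=
  have h := ((isExtension_extensionCLM A j).permCLM π).unique
    (isExtension_extensionCLM A (j.trans π.symm.toEmbedding))
  DFunLike.congr_fun (DFunLike.congr_fun h F) G

end Permutations

section Embedding

-- Without this shortcut, instance search times out on sums of maps into `SchwartzForm V`.
noncomputable instance (V : Type*) [NormedAddCommGroup V] [NormedSpace ℝ V] :
    AddCommGroup (SchwartzForm V) := ContinuousLinearMap.addCommGroup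

variable (k N : ℕ)

/-- The map `ε_{k,N}`, with the extensions `A_j` given by the integral over slices. -/
noncomputable def epsEmbedding : DVO k →L[ℂ] DVO N :=
  epsConst k N • ∑ j : Fin k ↪ Fin N, extensionCLM j

variable {k N}

theorem epsEmbedding_apply (A : DVO k) :
    epsEmbedding k N A = epsConst k N • ∑ j, extensionCLM j A := by
  simp [epsEmbedding]

theorem epsEmbedding_apply_apply (A : DVO k) (F G : 𝓢(Fin N → ℝ, ℂ)) :
    epsEmbedding k N A F G = epsConst k N * ∑ j, extensionCLM j A F G := by
  simp [epsEmbedding_apply]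

theorem isBosonicDist_epsEmbedding (A : DVO k) {F : 𝓢(Fin N → ℝ, ℂ)} (hF : IsBosonic F) :
    IsBosonicDist (epsEmbedding k N A F) := fun π G => by
  let τ : (Fin k ↪ Fin N) ≃ (Fin k ↪ Fin N) := Equiv.embeddingCongr (Equiv.refl _) π.symm
  have hterm (j : Fin k ↪ Fin N) :
      extensionCLM j A F (permCLM N π G) = extensionCLM (τ j) A F G := by
    conv_lhs => rw [← hF.permCLM_eq π]
    exact extensionCLM_permCLM A j π F G
  simp only [epsEmbedding_apply_apply, hterm, τ.sum_comp fun j => extensionCLM j A F G]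

theorem conj_epsConst : starRingEnd ℂ (epsConst k N) = epsConst k N := by
  rw [epsConst, map_inv₀, Complex.conj_natCast]

theorem IsSkewAdjointDVO.epsEmbedding {A : DVO k} (hA : IsSkewAdjointDVO A) :
    IsSkewAdjointDVO (epsEmbedding k N A) := fun F G Fc Gc hF hG => by
  simp only [epsEmbedding_apply_apply, hA.extensionCLM _ F G Fc Gc hF hG, map_mul, map_sum,
    conj_epsConst, Finset.sum_neg_distrib, mul_neg]

end Embedding

/-- Let `1 ≤ k ≤ N`, and for each `k`-tuple `j` of pairwise distinct elements of `{1,…,N}`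
(i.e. each embedding `j : Fin k ↪ Fin N`) let `ℰ A j` be the `N`-particle extension of `A` in the
variables `j₁,…,j_k`.  Then the map `ε_{k,N}(A) := C_{k,N}·Σ_j ℰ A j` (i) sends bosonic Schwartz
functions to bosonic tempered distributions, (ii) preserves skew-adjointness, and (iii) is linear
and continuous in `A` for the topologies of uniform convergence on bounded sets. -/
theorem eps_embedding_properties (k N : ℕ) (hk : 0 < k) (hkN : k ≤ N)
    (ℰ : DVO k → (Fin k ↪ Fin N) → DVO N)
    (hℰ : ∀ (A : DVO k) (j : Fin k ↪ Fin N), IsExtension k N A (⇑j) (ℰ A j)) :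
    (∀ (A : DVO k) (F : SchwartzMap (Fin N → ℝ) ℂ), IsBosonic F →
      IsBosonicDist ((epsConst k N • ∑ j : Fin k ↪ Fin N, ℰ A j) F)) ∧
    (∀ A : DVO k, IsSkewAdjointDVO A →
      IsSkewAdjointDVO (epsConst k N • ∑ j : Fin k ↪ Fin N, ℰ A j)) ∧
    (∀ A B : DVO k,
      (epsConst k N • ∑ j : Fin k ↪ Fin N, ℰ (A + B) j)
        = (epsConst k N • ∑ j : Fin k ↪ Fin N, ℰ A j)
          + (epsConst k N • ∑ j : Fin k ↪ Fin N, ℰ B j)) ∧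
    (∀ (c : ℂ) (A : DVO k),
      (epsConst k N • ∑ j : Fin k ↪ Fin N, ℰ (c • A) j)
        = c • (epsConst k N • ∑ j : Fin k ↪ Fin N, ℰ A j)) ∧
    Continuous (fun A : DVO k => epsConst k N • ∑ j : Fin k ↪ Fin N, ℰ A j) := by
  have hε (A : DVO k) : epsConst k N • ∑ j, ℰ A j = epsEmbedding k N A := by
    simp only [epsEmbedding_apply, fun j => (hℰ A j).unique (isExtension_extensionCLM A j)]
  simp only [hε]
  exact ⟨fun A F hF => isBosonicDist_epsEmbedding A hF, fun A hA => hA.epsEmbedding,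
    map_add (epsEmbedding k N), map_smul (epsEmbedding k N), (epsEmbedding k N).continuous⟩
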